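/- Let X = { x ∈ ℝ⁴ : x₁+x₂+x₃−x₄ ∈ [0,1], x₁+x₂−x₃+x₄ ∈ [0,1], x₁−x₂+x₃+x₄ ∈ [0,1], −x₁+x₂+x₃+x₄ ∈ [0,1] } and let J : ℝ⁴ → ℝ⁴ be given by y₁ = x₁+x₂+x₃−x₄, y₂ = x₁+x₂−x₃+x₄, y₃ = x₁−x₂+x₃+x₄, y₄ = −x₁+x₂+x₃+x₄. Let f(x) = 8x₁x₂x₃x₄ − Σ_{i=1}^4 x_i⁴ + 2 Σ_{1≤i<j≤4} x_i² x_j². Then J(X) = [0,1]⁴, det J = −16, and f*(y) := f(J⁻¹y) = y₁y₂y₃y₄ for all y ∈ [0,1]⁴. -/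

import Mathlib

open MeasureTheory

/-- The example in Section 3: for the linear transformation `J` given by (3.4) and
`f = 8x₁x₂x₃x₄ − Σᵢ xᵢ⁴ + 2Σ_{i<j} xᵢ²xⱼ²` on
`X = {x ∈ ℝ⁴ : yᵢ(x) ∈ [0,1]}`, we have `J(X) = [0,1]⁴`, `det J = −16`, and
`f*(y) = y₁y₂y₃y₄` on `[0,1]⁴`. -/
theorem example_transformation
    (X : Set (Fin 4 → ℝ))
    (hX : X = {x : Fin 4 → ℝ |
      x 0 + x 1 + x 2 - x 3 ∈ Set.Icc (0 : ℝ) 1 ∧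
      x 0 + x 1 - x 2 + x 3 ∈ Set.Icc (0 : ℝ) 1 ∧
      x 0 - x 1 + x 2 + x 3 ∈ Set.Icc (0 : ℝ) 1 ∧
      -x 0 + x 1 + x 2 + x 3 ∈ Set.Icc (0 : ℝ) 1})
    (J : (Fin 4 → ℝ) ≃ₗ[ℝ] (Fin 4 → ℝ))
    (hJ : ∀ x : Fin 4 → ℝ, J x =
      ![x 0 + x 1 + x 2 - x 3, x 0 + x 1 - x 2 + x 3,
        x 0 - x 1 + x 2 + x 3, -x 0 + x 1 + x 2 + x 3])
    (f : (Fin 4 → ℝ) → ℝ)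
    (hf : ∀ x : Fin 4 → ℝ, f x =
      8 * x 0 * x 1 * x 2 * x 3 - (x 0 ^ 4 + x 1 ^ 4 + x 2 ^ 4 + x 3 ^ 4) +
        2 * (x 0 ^ 2 * x 1 ^ 2 + x 0 ^ 2 * x 2 ^ 2 + x 0 ^ 2 * x 3 ^ 2 +
          x 1 ^ 2 * x 2 ^ 2 + x 1 ^ 2 * x 3 ^ 2 + x 2 ^ 2 * x 3 ^ 2)) :
    J '' X = {y : Fin 4 → ℝ | ∀ i, y i ∈ Set.Icc (0 : ℝ) 1} ∧
    LinearMap.det (J : (Fin 4 → ℝ) →ₗ[ℝ] (Fin 4 → ℝ)) = -16 ∧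
    ∀ y ∈ {y : Fin 4 → ℝ | ∀ i, y i ∈ Set.Icc (0 : ℝ) 1},
      f (J.symm y) = y 0 * y 1 * y 2 * y 3 := by
  subst hX
  refine ⟨?_, ?_, ?_⟩
  · ext y
    simp only [Set.mem_image, Set.mem_setOf_eq, Fin.forall_fin_succ]
    constructor
    · rintro ⟨x, hx, rfl⟩
      rw [hJ]
      simpa using hx
    · intro hy
      refine ⟨J.symm y, ?_, J.apply_symm_apply y⟩
      have h := hJ (J.symm y)
      rw [J.apply_symm_apply] at h
      generalize J.symm y = x at h
      subst h
      simpa using hy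
  · have h : LinearMap.toMatrix' (J : (Fin 4 → ℝ) →ₗ[ℝ] (Fin 4 → ℝ)) =
        !![1, 1, 1, -1; 1, 1, -1, 1; 1, -1, 1, 1; -1, 1, 1, 1] := by
      ext i j
      rw [LinearMap.toMatrix'_apply]
      simp only [LinearEquiv.coe_coe, hJ]
      fin_cases i <;> fin_cases j <;> simp
    rw [← LinearMap.det_toMatrix', h]
    simp [Matrix.det_succ_row_zero, Fin.sum_univ_succ, Fin.succAbove]
    try norm_num
  · intro y _
    have h := hJ (J.symm y)
    rw [J.apply_symm_apply] at h
    generalize J.symm y = x at h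
    subst h
    rw [hf]
    simp
    ring
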